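/- Let γ > 0, B_z > 0, B⊥ > 0, set ω = ω₀ = 2B_z (resonance, so δ = 0 and B_z − ω/2 = 0), and let |Φ|² ≥ 0. Consider angles θ₀, φ₀ satisfying the fixed-point equations −B⊥·cos θ₀·cos φ₀ = 0 and γB_z·sin θ₀ + B⊥·sin φ₀ = 0, and define the Ponderomotive potential V_P = |Φ|²·[(B_z − ω/2)·(1 − cos θ₀) − B⊥·sin θ₀·cos φ₀] = −|Φ|²·B⊥·sin θ₀·cos φ₀. Then: (i) if B⊥ ≤ γB_z and sin θ₀ = B⊥/(γB_z) with cos θ₀ ≠ 0, the equations force sin φ₀ = −1, hence cos φ₀ = 0 and V_P = 0; (ii) if B⊥ > γB_z and sin θ₀ = 1 (so cos θ₀ = 0), then sin φ₀ = −γB_z/B⊥, cos φ₀ = ±√(1 − γ²B_z²/B⊥²), and V_P = ∓|Φ|²·√(B⊥² − γ²B_z²). In particular, for B⊥ > γB_z one stationary solution has strictly negative Ponderomotive potential V_P = −|Φ|²·√(B⊥² − γ²B_z²). -/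

import Mathlib

/-!
The azimuthal torque balance `B⊥ sin φ = -(γω/2) sin θ` gives
`|B⊥ cos φ| = √(B⊥² - (γω/2)² sin² θ)`. At resonance the polar balance reads
`cos θ * cos φ = 0` and the potential reduces to `-|Φ|² B⊥ sin θ cos φ`, so it vanishes off the
equator, while on the equator (`sin θ = 1`) the torque balance determines it up to the sign of
`cos φ`. The negative branch is realised by taking `φ` in `[-π/2, π/2]`.
-/

section

open Real

variable {γ Bz ω B Φ2 θ φ : ℝ}

/-- The rotating-frame fixed-point equations of a classical spin with Gilbert damping `γ` in the
static field `Bz = ω₀ / 2` and a transverse field of amplitude `B = B⊥` rotating at frequency `ω`.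
The half-detuning `δ = (ω - ω₀) / 2` appears as `ω / 2 - Bz`; `θ` and `φ` are the polar and
azimuthal angles. -/
structure IsSpinFixedPoint (γ Bz ω B θ φ : ℝ) : Prop where
  polar : -(ω / 2 - Bz) * sin θ - B * cos θ * cos φ = 0
  azimuthal : γ * (ω / 2) * sin θ + B * sin φ = 0

/-- The Ponderomotive potential `V_P` that the spin with polar angle `θ` and azimuthal angle `φ`
exerts on the total exciton field; `Φ2` stands for `|Φ|²`. -/
noncomputable def ponderomotivePotential (Φ2 Bz ω B θ φ : ℝ) : ℝ :=
  Φ2 * ((Bz - ω / 2) * (1 - cos θ) - B * sin θ * cos φ)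

theorem isSpinFixedPoint_resonance_iff :
    IsSpinFixedPoint γ Bz (2 * Bz) B θ φ ↔
      -B * cos θ * cos φ = 0 ∧ γ * Bz * sin θ + B * sin φ = 0 := by
  have half_freq : 2 * Bz / 2 = Bz := by ring
  constructor
  · rintro ⟨hpolar, hazimuthal⟩
    rw [half_freq] at hpolar hazimuthal
    exact ⟨by linarith, hazimuthal⟩
  · rintro ⟨hpolar, hazimuthal⟩
    refine ⟨?_, ?_⟩ <;> rw [half_freq] <;> linarith

theorem ponderomotivePotential_resonance :
    ponderomotivePotential Φ2 Bz (2 * Bz) B θ φ = -Φ2 * B * sin θ * cos φ := by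
  unfold ponderomotivePotential
  ring

namespace IsSpinFixedPoint

theorem sin_azimuth (h : IsSpinFixedPoint γ Bz ω B θ φ) (hB : B ≠ 0) :
    sin φ = -(γ * (ω / 2) * sin θ / B) := by
  rw [← neg_div, eq_div_iff hB]
  linarith [h.azimuthal]

theorem abs_cos_azimuth (h : IsSpinFixedPoint γ Bz ω B θ φ) (hB : B ≠ 0) :
    |cos φ| = √(1 - (γ * (ω / 2) * sin θ / B) ^ 2) := by
  rw [abs_cos_eq_sqrt_one_sub_sin_sq, h.sin_azimuth hB, neg_sq]

theorem abs_mul_cos_azimuth (h : IsSpinFixedPoint γ Bz ω B θ φ) :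
    |B * cos φ| = √(B ^ 2 - (γ * (ω / 2) * sin θ) ^ 2) := by
  have torque : γ * (ω / 2) * sin θ = -(B * sin φ) := eq_neg_of_add_eq_zero_left h.azimuthal
  rw [← sqrt_sq_eq_abs, torque, mul_pow, cos_sq']
  ring_nf

theorem cos_azimuth_eq_zero (h : IsSpinFixedPoint γ Bz (2 * Bz) B θ φ) (hB : B ≠ 0)
    (hθ : cos θ ≠ 0) : cos φ = 0 :=
  (mul_eq_zero.mp (isSpinFixedPoint_resonance_iff.mp h).1).resolve_left
    (mul_ne_zero (neg_ne_zero.mpr hB) hθ)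

theorem cos_azimuth_and_potential_of_sin_polar_eq_one
    (h : IsSpinFixedPoint γ Bz (2 * Bz) B θ φ) (hB : 0 < B) (hθ : sin θ = 1) :
    (cos φ = √(1 - γ ^ 2 * Bz ^ 2 / B ^ 2) ∧
        ponderomotivePotential Φ2 Bz (2 * Bz) B θ φ = -Φ2 * √(B ^ 2 - γ ^ 2 * Bz ^ 2)) ∨
      (cos φ = -√(1 - γ ^ 2 * Bz ^ 2 / B ^ 2) ∧
        ponderomotivePotential Φ2 Bz (2 * Bz) B θ φ = Φ2 * √(B ^ 2 - γ ^ 2 * Bz ^ 2)) := by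
  have torque : γ * (2 * Bz / 2) * sin θ = γ * Bz := by rw [hθ]; ring
  have abs_cos := h.abs_cos_azimuth hB.ne'
  have mul_abs_cos := h.abs_mul_cos_azimuth
  rw [torque, div_pow, mul_pow] at abs_cos
  rw [torque, abs_mul, abs_of_pos hB, mul_pow] at mul_abs_cos
  rw [ponderomotivePotential_resonance, hθ, ← abs_cos, ← mul_abs_cos]
  rcases abs_choice (cos φ) with hcos | hcos <;> rw [hcos]
  · exact Or.inl ⟨rfl, by ring⟩
  · exact Or.inr ⟨(neg_neg _).symm, by ring⟩

end IsSpinFixedPoint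

theorem isSpinFixedPoint_pi_div_two_arcsin (hB : 0 < B) (hle : |γ * Bz| ≤ B) :
    IsSpinFixedPoint γ Bz (2 * Bz) B (π / 2) (arcsin (-(γ * Bz / B))) := by
  have hratio : |-(γ * Bz / B)| ≤ 1 := by
    rwa [abs_neg, abs_div, abs_of_pos hB, div_le_one hB]
  rw [isSpinFixedPoint_resonance_iff, cos_pi_div_two, sin_pi_div_two,
    sin_arcsin (abs_le.mp hratio).1 (abs_le.mp hratio).2, mul_neg, mul_div_cancel₀ _ hB.ne']
  exact ⟨by ring, by ring⟩

theorem ponderomotivePotential_pi_div_two_arcsin (hB : 0 < B) (hle : |γ * Bz| ≤ B) :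
    ponderomotivePotential Φ2 Bz (2 * Bz) B (π / 2) (arcsin (-(γ * Bz / B))) =
      -Φ2 * √(B ^ 2 - γ ^ 2 * Bz ^ 2) := by
  have amplitude := (isSpinFixedPoint_pi_div_two_arcsin hB hle).abs_mul_cos_azimuth
  rw [abs_of_nonneg (mul_nonneg hB.le (cos_arcsin_nonneg _)), sin_pi_div_two, mul_one,
    mul_div_cancel_left₀ Bz two_ne_zero, mul_pow] at amplitude
  rw [ponderomotivePotential_resonance, sin_pi_div_two, mul_one, mul_assoc, amplitude]

end

/-- At resonance (`ω = ω₀ = 2B_z`), for fixed points of the driven damped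
spin: (i) if `B⊥ ≤ γB_z` and `sin θ₀ = B⊥/(γB_z)` with `cos θ₀ ≠ 0` then `sin φ₀ = −1`,
`cos φ₀ = 0` and `V_P = 0`; (ii) if `B⊥ > γB_z` and `sin θ₀ = 1` then `cos θ₀ = 0`,
`sin φ₀ = −γB_z/B⊥`, `cos φ₀ = ±√(1 − γ²B_z²/B⊥²)` and `V_P = ∓|Φ|²√(B⊥² − γ²B_z²)`;
in particular for `B⊥ > γB_z` there is a stationary solution with
`V_P = −|Φ|²√(B⊥² − γ²B_z²)`. -/
theorem stmt_13 (γ Bz B Φ2 : ℝ) (hγ : 0 < γ) (hBz : 0 < Bz) (hB : 0 < B)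
    (hΦ : 0 ≤ Φ2) (ω : ℝ) (hω : ω = 2 * Bz)
    (θ₀ φ₀ : ℝ)
    (h1 : -B * Real.cos θ₀ * Real.cos φ₀ = 0)
    (h2 : γ * Bz * Real.sin θ₀ + B * Real.sin φ₀ = 0) :
    let VP : ℝ := Φ2 * ((Bz - ω / 2) * (1 - Real.cos θ₀) - B * Real.sin θ₀ * Real.cos φ₀)
    VP = -Φ2 * B * Real.sin θ₀ * Real.cos φ₀ ∧
    (B ≤ γ * Bz → Real.sin θ₀ = B / (γ * Bz) → Real.cos θ₀ ≠ 0 →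
      Real.sin φ₀ = -1 ∧ Real.cos φ₀ = 0 ∧ VP = 0) ∧
    (γ * Bz < B → Real.sin θ₀ = 1 →
      Real.cos θ₀ = 0 ∧ Real.sin φ₀ = -(γ * Bz / B) ∧
      ((Real.cos φ₀ = Real.sqrt (1 - γ ^ 2 * Bz ^ 2 / B ^ 2) ∧
          VP = -Φ2 * Real.sqrt (B ^ 2 - γ ^ 2 * Bz ^ 2)) ∨
        (Real.cos φ₀ = -Real.sqrt (1 - γ ^ 2 * Bz ^ 2 / B ^ 2) ∧
          VP = Φ2 * Real.sqrt (B ^ 2 - γ ^ 2 * Bz ^ 2)))) ∧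
    (γ * Bz < B → ∃ θ φ : ℝ,
      -B * Real.cos θ * Real.cos φ = 0 ∧
      γ * Bz * Real.sin θ + B * Real.sin φ = 0 ∧
      Φ2 * ((Bz - ω / 2) * (1 - Real.cos θ) - B * Real.sin θ * Real.cos φ) =
        -Φ2 * Real.sqrt (B ^ 2 - γ ^ 2 * Bz ^ 2)) := by
  subst hω
  have h : IsSpinFixedPoint γ Bz (2 * Bz) B θ₀ φ₀ := isSpinFixedPoint_resonance_iff.mpr ⟨h1, h2⟩
  have sin_azimuth : Real.sin φ₀ = -(γ * Bz * Real.sin θ₀ / B) := by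
    simpa only [mul_div_cancel_left₀ Bz two_ne_zero] using h.sin_azimuth hB.ne'
  intro VP
  have potential_eq : VP = -Φ2 * B * Real.sin θ₀ * Real.cos φ₀ := ponderomotivePotential_resonance
  refine ⟨potential_eq, fun _ hsin hcos => ?_, fun _ hsin => ?_, fun hlt => ?_⟩
  · have cos_azimuth : Real.cos φ₀ = 0 := h.cos_azimuth_eq_zero hB.ne' hcos
    refine ⟨?_, cos_azimuth, by rw [potential_eq, cos_azimuth, mul_zero]⟩
    rw [sin_azimuth, hsin, mul_div_cancel₀ _ (mul_pos hγ hBz).ne', div_self hB.ne']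
  · exact ⟨Real.cos_eq_zero_iff_sin_eq.mpr (Or.inl hsin), by rw [sin_azimuth, hsin, mul_one],
      h.cos_azimuth_and_potential_of_sin_polar_eq_one hB hsin⟩
  · have hle : |γ * Bz| ≤ B := (abs_of_pos (mul_pos hγ hBz)).trans_le hlt.le
    obtain ⟨polar, azimuthal⟩ :=
      isSpinFixedPoint_resonance_iff.mp (isSpinFixedPoint_pi_div_two_arcsin hB hle)
    exact ⟨_, _, polar, azimuthal, ponderomotivePotential_pi_div_two_arcsin hB hle⟩
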